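/- Let G be a connected simple graph, let H be a branch of G with root u such that H is a bipartite graph, and let x be a first Q-eigenvector of G (an eigenvector of the signless Laplacian Q(G) corresponding to its least eigenvalue). If x(u) = 0, then x(p) = 0 for every vertex p of H (i.e., H is a zero branch of G with respect to x). -/

import Mathlib

/-!
Let `c` be the `±1` signing of the bipartite branch `S` (extended by `0`) and put `z = c * |x|`.
Since `x u = 0` and every `a ∈ S \ {u}` has all its neighbours in `S`, each vertex satisfies
`z a * (Q z) a ≤ q_min * (z a)²`: at `a ∈ S \ {u}` this compares `-|x a| * |x b|` with `x a * x b`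
over the neighbours `b` of `a`, and elsewhere `z a = 0`. Hence `z` minimises the Rayleigh quotient,
and as `Q - q_min` is positive semidefinite (`posSemidef_sub_qmin`), `Q z = q_min z`.

Reading this equation at a vertex `v ∈ S` with `x v = 0`, the nonzero terms of the sum over the
neighbours all have the same sign, so `x` vanishes at every neighbour of `v` in `S`. By
connectedness of `G` the zero at `u` propagates to all of `S`.
-/

open SimpleGraph Finset Matrix
open scoped Classical

/-- The signless Laplacian matrix `Q(G) = D(G) + A(G)` of a simple graph. -/
noncomputable def Qmatrix {V : Type*} [Fintype V] (G : SimpleGraph V) : Matrix V V ℝ :=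
  G.degMatrix ℝ + G.adjMatrix ℝ

/-- The least eigenvalue of the signless Laplacian of `G`. -/
noncomputable def qmin {V : Type*} [Fintype V] (G : SimpleGraph V) : ℝ :=
  sInf {q : ℝ | ∃ x : V → ℝ, x ≠ 0 ∧ Qmatrix G *ᵥ x = q • x}

/-- A first `Q`-eigenvector of `G`: an eigenvector of `Q(G)` for the least eigenvalue. -/
def IsFirstQEigenvector {V : Type*} [Fintype V] (G : SimpleGraph V) (x : V → ℝ) : Prop :=
  x ≠ 0 ∧ Qmatrix G *ᵥ x = qmin G • x

/-- `S` (together with the root `u ∈ S`) induces a branch of `G` with root `u`: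
no edge of `G` joins `S \ {u}` to the complement of `S`. -/
def IsBranch {V : Type*} (G : SimpleGraph V) (S : Set V) (u : V) : Prop :=
  u ∈ S ∧ ∀ a ∈ S, a ≠ u → ∀ b ∉ S, ¬ G.Adj a b

lemma Qmatrix_mulVec_apply {V : Type*} [Fintype V] (G : SimpleGraph V) (y : V → ℝ) (a : V) :
    (Qmatrix G *ᵥ y) a = G.degree a * y a + ∑ b ∈ G.neighborFinset a, y b := by
  simp [Qmatrix, Matrix.add_mulVec, SimpleGraph.degMatrix, Matrix.mulVec_diagonal]

/-- The set whose infimum defines `qmin` is finite, so `qmin` is a genuine lower bound of it. -/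
lemma qmin_le {V : Type*} [Fintype V] (G : SimpleGraph V) {q : ℝ} {y : V → ℝ} (hy : y ≠ 0)
    (h : Qmatrix G *ᵥ y = q • y) : qmin G ≤ q := by
  refine csInf_le (Set.Finite.bddBelow ?_) ⟨y, hy, h⟩
  refine (Module.End.finite_hasEigenvalue (Matrix.toLin' (Qmatrix G))).subset ?_
  rintro r ⟨w, hw, hr⟩
  exact Module.End.hasEigenvalue_of_hasEigenvector (x := w)
    ⟨Module.End.mem_eigenspace_iff.2 (by simpa using hr), hw⟩

lemma posSemidef_sub_qmin {V : Type*} [Fintype V] (G : SimpleGraph V) :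
    (Qmatrix G - qmin G • (1 : Matrix V V ℝ)).PosSemidef := by
  have hH : (Qmatrix G - qmin G • (1 : Matrix V V ℝ)).IsHermitian := by
    unfold Matrix.IsHermitian Qmatrix
    simp [Matrix.conjTranspose_eq_transpose_of_trivial, SimpleGraph.degMatrix]
  rw [hH.posSemidef_iff_eigenvalues_nonneg]
  intro i
  have h1 := hH.mulVec_eigenvectorBasis i
  have h0 : (⇑(hH.eigenvectorBasis i) : V → ℝ) ≠ 0 := by
    intro h
    exact hH.eigenvectorBasis.toBasis.ne_zero i (by ext j; simpa using congrFun h j)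
  rw [Matrix.sub_mulVec, Matrix.smul_mulVec, Matrix.one_mulVec, sub_eq_iff_eq_add,
    ← add_smul] at h1
  have := qmin_le G h0 h1
  simpa using this

/-- The `±1` signing of a bipartite induced subgraph, extended by `0`. -/
lemma exists_signing {V : Type*} (G : SimpleGraph V) (S : Set V)
    (hbip : (G.induce S).Colorable 2) :
    ∃ c : V → ℝ, (∀ a ∈ S, c a * c a = 1) ∧ (∀ a ∉ S, c a = 0) ∧
      ∀ a ∈ S, ∀ b ∈ S, G.Adj a b → c b = - c a := by
  obtain ⟨C⟩ := hbip
  refine ⟨fun a => if h : a ∈ S then (if C ⟨a, h⟩ = 0 then 1 else -1) else 0, ?_, ?_, ?_⟩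
  · intro a ha
    simp only [ha, dite_true]
    split_ifs <;> norm_num
  · intro a ha
    simp [ha]
  · intro a ha b hb hab
    have hne : C ⟨a, ha⟩ ≠ C ⟨b, hb⟩ := C.valid (by simpa using hab)
    simp only [ha, hb, dite_true]
    split_ifs with h1 h2 h2
    · exact absurd (h2.trans h1.symm) hne
    · norm_num
    · norm_num
    · omega

theorem stmt_0 {V : Type*} [Fintype V] (G : SimpleGraph V) (hG : G.Connected)
    (S : Set V) (u : V) (hbr : IsBranch G S u)
    (hbip : (G.induce S).Colorable 2)
    (x : V → ℝ) (hx : IsFirstQEigenvector G x) (hu : x u = 0) :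
    ∀ p ∈ S, x p = 0 := by
  obtain ⟨c, hc1, hc0, hcn⟩ := exists_signing G S hbip
  obtain ⟨huS, hbr⟩ := hbr
  set z : V → ℝ := fun a => c a * |x a| with hz
  have hpt : ∀ a, z a * (Qmatrix G *ᵥ z) a ≤ qmin G * (z a * z a) := by
    intro a
    by_cases haS : a ∈ S
    · by_cases hau : a = u
      · simp [hz, hau, hu]
      · have hxa := congrFun hx.2 a
        rw [Qmatrix_mulVec_apply, Pi.smul_apply, smul_eq_mul] at hxa
        have hzz : z a * z a = x a * x a := by
          calc z a * z a = (c a * c a) * (|x a| * |x a|) := by simp only [hz]; ring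
            _ = _ := by rw [hc1 a haS, abs_mul_abs_self, one_mul]
        have hsum : z a * ∑ b ∈ G.neighborFinset a, z b
            ≤ x a * ∑ b ∈ G.neighborFinset a, x b := by
          rw [Finset.mul_sum, Finset.mul_sum]
          refine Finset.sum_le_sum fun b hb => ?_
          rw [SimpleGraph.mem_neighborFinset] at hb
          have hbS : b ∈ S := by
            by_contra h
            exact hbr a haS hau b h hb
          calc z a * z b = -((c a * c a) * (|x a| * |x b|)) := by
                simp only [hz, hcn a haS b hbS hb]; ring
            _ = -|x a * x b| := by rw [hc1 a haS, one_mul, abs_mul]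
            _ ≤ x a * x b := neg_abs_le _
        calc z a * (Qmatrix G *ᵥ z) a
            = G.degree a * (z a * z a) + z a * ∑ b ∈ G.neighborFinset a, z b := by
              rw [Qmatrix_mulVec_apply]; ring
          _ ≤ G.degree a * (x a * x a) + x a * ∑ b ∈ G.neighborFinset a, x b := by
              rw [hzz]; gcongr
          _ = x a * (G.degree a * x a + ∑ b ∈ G.neighborFinset a, x b) := by ring
          _ = qmin G * (z a * z a) := by rw [hxa, hzz]; ring
    · simp [hz, hc0 a haS]
  have hP := posSemidef_sub_qmin G
  have hMz : (Qmatrix G - qmin G • (1 : Matrix V V ℝ)) *ᵥ z = 0 := by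
    rw [← hP.dotProduct_mulVec_zero_iff]
    refine le_antisymm ?_ (hP.dotProduct_mulVec_nonneg z)
    rw [Matrix.sub_mulVec, Matrix.smul_mulVec, Matrix.one_mulVec]
    refine Finset.sum_nonpos fun a _ => ?_
    have := hpt a
    simp only [Pi.star_apply, star_trivial, Pi.sub_apply, Pi.smul_apply, smul_eq_mul]
    linarith
  have hstep : ∀ v ∈ S, x v = 0 → ∀ b ∈ S, G.Adj v b → x b = 0 := by
    intro v hv hxv b hb hvb
    have h := congrFun hMz v
    rw [Matrix.sub_mulVec, Matrix.smul_mulVec, Matrix.one_mulVec, Pi.sub_apply,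
      Qmatrix_mulVec_apply] at h
    have hzv : z v = 0 := by simp [hz, hxv]
    have hsum : ∑ b ∈ G.neighborFinset v, z b = 0 := by simpa [hzv] using h
    have hval : ∀ b ∈ S, G.Adj v b → -c v * z b = |x b| := by
      intro b hb hvb
      calc -c v * z b = (c v * c v) * |x b| := by
            simp only [hz, hcn v hv b hb hvb]; ring
        _ = |x b| := by rw [hc1 v hv, one_mul]
    have hsum' : ∑ b ∈ G.neighborFinset v, -c v * z b = 0 := by
      rw [← Finset.mul_sum, hsum, mul_zero]
    have hnn : ∀ b ∈ G.neighborFinset v, 0 ≤ -c v * z b := by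
      intro b hb
      rw [SimpleGraph.mem_neighborFinset] at hb
      by_cases hbS : b ∈ S
      · rw [hval b hbS hb]; exact abs_nonneg _
      · simp [hz, hc0 b hbS]
    have := (Finset.sum_eq_zero_iff_of_nonneg hnn).1 hsum' b (by simpa using hvb)
    rw [hval b hb hvb] at this
    exact abs_eq_zero.1 this
  -- A walk from `u` may leave `S`, but it can only come back through `u`.
  have hwalk : ∀ v w : V, G.Walk v w → (v ∈ S → x v = 0) → (w ∈ S → x w = 0) := by
    intro v w p
    induction p with
    | nil => exact id
    | @cons a b _ hab _ ih =>
      intro ha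
      refine ih fun hb => ?_
      by_cases haS : a ∈ S
      · exact hstep a haS (ha haS) b hb hab
      · by_cases hbu : b = u
        · rw [hbu, hu]
        · exact absurd hab.symm (hbr b hb hbu a haS)
  intro p hp
  obtain ⟨w⟩ := hG.preconnected u p
  exact hwalk u p w (fun _ => hu) hp
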